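/- In the diffusive regime 0 ≤ p < 3/4, the estimator is asymptotically normal: the law of √(log n)·(p̂_n − p) converges weakly to the centered Gaussian distribution with variance (3 − 4p)/4 (the inverse of the asymptotic Fisher information I(p) = 4/(3 − 4p)). -/

import Mathlib

open MeasureTheory ProbabilityTheory Filter Finset
open scoped BoundedContinuousFunction ENNReal NNReal Topology

noncomputable section

variable {Ω : Type*}

/-- Position of the elephant random walk: `S n = X 1 + ⋯ + X n`. -/
def erwS (X : ℕ → Ω → ℝ) (n : ℕ) (ω : Ω) : ℝ :=
  ∑ k ∈ Finset.Icc 1 n, X k ω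

/-- `V n = 4 ∑_{k=1}^{n-1} (S k / k)²`, the approximate conditional Fisher information. -/
def erwV (X : ℕ → Ω → ℝ) (n : ℕ) (ω : Ω) : ℝ :=
  4 * ∑ k ∈ Finset.Icc 1 (n - 1), (erwS X k ω / k) ^ 2

/-- The quasi-maximum likelihood estimator `p̂ n` of the memory parameter. -/
def erwPhat (X : ℕ → Ω → ℝ) (n : ℕ) (ω : Ω) : ℝ :=
  (∑ k ∈ Finset.Icc 1 (n - 1), (erwS X k ω / k) * (X (k + 1) ω + erwS X k ω / k)) /
    (2 * ∑ k ∈ Finset.Icc 1 (n - 1), (erwS X k ω / k) ^ 2)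

/-- The elephant random walk hypotheses with memory parameter `p ∈ [0,1]`:
the steps take values in `{-1, 1}`, are adapted to the filtration `ℱ`
(which plays the role of `σ(X_1, …, X_n)`), and
`E[X_{n+1} | ℱ_n] = (2p - 1) · S_n / n` almost surely. -/
def IsERW {m0 : MeasurableSpace Ω} (μ : Measure Ω) (ℱ : Filtration ℕ m0)
    (X : ℕ → Ω → ℝ) (p : ℝ) : Prop :=
  0 ≤ p ∧ p ≤ 1 ∧
  (∀ n, 1 ≤ n → ∀ ω, X n ω = 1 ∨ X n ω = -1) ∧
  (∀ n, 1 ≤ n → Measurable[ℱ n] (X n)) ∧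
  (∀ n, 1 ≤ n → μ[X (n + 1) | ℱ n] =ᵐ[μ] fun ω => (2 * p - 1) * (erwS X n ω / n))

/-- Bounded measurable real functions. -/
def BM (m : MeasurableSpace Ω) (f : Ω → ℝ) : Prop :=
  Measurable[m] f ∧ ∃ C, ∀ ω, |f ω| ≤ C

namespace BM

lemma const {m : MeasurableSpace Ω} (c : ℝ) : BM m (fun _ => c) :=
  ⟨measurable_const, |c|, fun _ => le_rfl⟩

lemma add {m : MeasurableSpace Ω} {f g : Ω → ℝ} (hf : BM m f) (hg : BM m g) :
    BM m (fun ω => f ω + g ω) := by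
  obtain ⟨hf1, C, hC⟩ := hf
  obtain ⟨hg1, D, hD⟩ := hg
  exact ⟨hf1.add hg1, C + D, fun ω => (abs_add_le _ _).trans (add_le_add (hC ω) (hD ω))⟩

lemma mul {m : MeasurableSpace Ω} {f g : Ω → ℝ} (hf : BM m f) (hg : BM m g) :
    BM m (fun ω => f ω * g ω) := by
  obtain ⟨hf1, C, hC⟩ := hf
  obtain ⟨hg1, D, hD⟩ := hg
  refine ⟨hf1.mul hg1, C * D, fun ω => ?_⟩
  rw [abs_mul]
  exact mul_le_mul (hC ω) (hD ω) (abs_nonneg _) ((abs_nonneg _).trans (hC ω))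

lemma neg {m : MeasurableSpace Ω} {f : Ω → ℝ} (hf : BM m f) : BM m (fun ω => - f ω) := by
  obtain ⟨hf1, C, hC⟩ := hf
  exact ⟨hf1.neg, C, fun ω => by rw [abs_neg]; exact hC ω⟩

lemma sub {m : MeasurableSpace Ω} {f g : Ω → ℝ} (hf : BM m f) (hg : BM m g) :
    BM m (fun ω => f ω - g ω) := by
  simpa [sub_eq_add_neg] using hf.add hg.neg

lemma abs {m : MeasurableSpace Ω} {f : Ω → ℝ} (hf : BM m f) : BM m (fun ω => |f ω|) := by
  obtain ⟨hf1, C, hC⟩ := hf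
  exact ⟨measurable_norm.comp hf1, C, fun ω => by rw [abs_abs]; exact hC ω⟩

lemma pow {m : MeasurableSpace Ω} {f : Ω → ℝ} (hf : BM m f) (n : ℕ) :
    BM m (fun ω => f ω ^ n) := by
  induction n with
  | zero => simpa using BM.const (m := m) 1
  | succ k ih => simpa [pow_succ] using ih.mul hf

lemma sum {m : MeasurableSpace Ω} {f : ℕ → Ω → ℝ} (N : ℕ) (hf : ∀ j < N, BM m (f j)) :
    BM m (fun ω => ∑ j ∈ range N, f j ω) := by
  induction N with
  | zero => simpa using BM.const (m := m) 0
  | succ k ih =>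
    simp only [sum_range_succ]
    exact (ih fun j hj => hf j (by omega)).add (hf k (by omega))

lemma mono {m m' : MeasurableSpace Ω} (h : m ≤ m') {f : Ω → ℝ} (hf : BM m f) : BM m' f :=
  ⟨hf.1.mono h le_rfl, hf.2⟩

lemma int {m : MeasurableSpace Ω} {μ : Measure Ω} [IsFiniteMeasure μ] {f : Ω → ℝ}
    (hf : BM m f) : Integrable f μ := by
  obtain ⟨hf1, C, hC⟩ := hf
  exact Integrable.of_bound hf1.aestronglyMeasurable C (Eventually.of_forall hC)

end BM

lemma exp_cubic (x : ℝ) (hx : |x| ≤ 1) :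
    ‖Complex.exp (x * Complex.I) - (1 + x * Complex.I) * (Real.exp (-(x ^ 2) / 2) : ℝ)‖
      ≤ 2 * |x| ^ 3 := by
  have h1 := Complex.exp_bound (x := x * Complex.I) (by simpa using hx) (n := 3) (by norm_num)
  have h2 := Real.norm_exp_sub_one_sub_id_le (x := -(x ^ 2) / 2) (by
    rw [Real.norm_eq_abs, abs_div, abs_neg, abs_pow, abs_two]
    nlinarith [abs_nonneg x])
  set r1 : ℂ := Complex.exp (x * Complex.I) -
    ∑ m ∈ range 3, ((x : ℂ) * Complex.I) ^ m / (m.factorial : ℂ) with hr1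
  set r2 : ℝ := Real.exp (-(x ^ 2) / 2) - 1 - (-(x ^ 2) / 2) with hr2
  have e1 : Complex.exp (x * Complex.I) = r1 + (1 + x * Complex.I - (x : ℂ) ^ 2 / 2) := by
    rw [hr1]
    simp [sum_range_succ, mul_pow]
    ring
  have e2 : Real.exp (-(x ^ 2) / 2) = r2 + 1 - x ^ 2 / 2 := by rw [hr2]; ring
  rw [e1, e2]
  have e3 : r1 + (1 + x * Complex.I - (x : ℂ) ^ 2 / 2) -
      (1 + x * Complex.I) * ((r2 + 1 - x ^ 2 / 2 : ℝ) : ℂ) =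
      r1 + ((x ^ 3 / 2 : ℝ) : ℂ) * Complex.I - ((r2 : ℝ) + (r2 * x : ℝ) * Complex.I) := by
    push_cast
    ring
  rw [e3]
  have n1 : ‖r1‖ ≤ |x| ^ 3 * (2 / 9) := by
    refine h1.trans (le_of_eq ?_)
    simp [Nat.factorial]
    norm_num
  have n2 : |r2| ≤ |x| ^ 3 / 4 := by
    refine h2.trans ?_
    rw [Real.norm_eq_abs, abs_div, abs_neg, abs_pow, abs_two]
    have : 0 ≤ |x| ^ 3 := by positivity
    nlinarith [abs_nonneg x]
  have n3 : ‖((x ^ 3 / 2 : ℝ) : ℂ) * Complex.I‖ = |x| ^ 3 / 2 := by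
    rw [norm_mul, Complex.norm_real, Complex.norm_I, mul_one, Real.norm_eq_abs, abs_div, abs_pow,
      abs_two]
  have n4 : ‖((r2 : ℝ) + (r2 * x : ℝ) * Complex.I : ℂ)‖ ≤ |r2| + |r2| * |x| := by
    refine (norm_add_le _ _).trans ?_
    rw [norm_mul, Complex.norm_real, Complex.norm_I, mul_one, Complex.norm_real, Real.norm_eq_abs,
      Real.norm_eq_abs, abs_mul]
  have n5 : |r2| * |x| ≤ |r2| := by nlinarith [abs_nonneg r2]
  calc _ ≤ ‖r1 + ((x ^ 3 / 2 : ℝ) : ℂ) * Complex.I‖ + _ := norm_sub_le _ _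
    _ ≤ (‖r1‖ + ‖((x ^ 3 / 2 : ℝ) : ℂ) * Complex.I‖) + _ := by gcongr; exact norm_add_le _ _
    _ ≤ 2 * |x| ^ 3 := by
      have : 0 ≤ |x| ^ 3 := by positivity
      linarith

lemma norm_one_add_sq_le (x : ℝ) :
    ‖(1 + x * Complex.I : ℂ)‖ ≤ Real.exp (x ^ 2 / 2) := by
  have h : ‖(1 + x * Complex.I : ℂ)‖ ^ 2 = 1 + x ^ 2 := by
    rw [← Complex.normSq_eq_norm_sq, Complex.normSq_apply]
    simp
    ring
  refine le_of_sq_le_sq ?_ (Real.exp_pos _).le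
  rw [h, ← Real.exp_nat_mul]
  have := Real.add_one_le_exp (x ^ 2)
  have e : ((2 : ℕ) : ℝ) * (x ^ 2 / 2) = x ^ 2 := by push_cast; ring
  rw [e]
  linarith

lemma prod_diff (a b : ℕ → ℂ) (ha : ∀ j, ‖a j‖ ≤ 1) (hb : ∀ j, ‖b j‖ ≤ 1) (N : ℕ) :
    ‖∏ j ∈ range N, a j - ∏ j ∈ range N, b j‖ ≤ ∑ j ∈ range N, ‖a j - b j‖ := by
  have hpb : ∀ N, ‖∏ j ∈ range N, b j‖ ≤ 1 := fun N => by
    rw [norm_prod]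
    exact prod_le_one (fun _ _ => norm_nonneg _) fun j _ => hb j
  induction N with
  | zero => simp
  | succ k ih =>
    rw [prod_range_succ, prod_range_succ, sum_range_succ]
    have : (∏ j ∈ range k, a j) * a k - (∏ j ∈ range k, b j) * b k =
      (∏ j ∈ range k, a j - ∏ j ∈ range k, b j) * a k + (∏ j ∈ range k, b j) * (a k - b k) := by
      ring
    rw [this]
    refine (norm_add_le _ _).trans (add_le_add ?_ ?_)
    · rw [norm_mul]
      exact (mul_le_of_le_one_right (norm_nonneg _) (ha k)).trans ih
    · rw [norm_mul]
      exact mul_le_of_le_one_left (norm_nonneg _) (hpb k)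

lemma mart_core {m0 : MeasurableSpace Ω} (μ : Measure Ω) [IsProbabilityMeasure μ]
    (G : Filtration ℕ m0) (ξ : ℕ → Ω → ℝ) (δ K v : ℝ) (hδ : δ ≤ 1)
    (hb : ∀ j ω, |ξ j ω| ≤ δ) (hm : ∀ j, Measurable[G (j + 1)] (ξ j))
    (horth : ∀ j g, BM (G j) g → ∫ ω, g ω * ξ j ω ∂μ = 0) (N : ℕ)
    (hK : ∀ ω, ∑ j ∈ range N, ξ j ω ^ 2 ≤ K) (hv : 0 ≤ v) :
    ‖∫ ω, Complex.exp ((∑ j ∈ range N, ξ j ω : ℝ) * Complex.I) ∂μ - (Real.exp (-v / 2) : ℝ)‖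
      ≤ 2 * δ * K + Real.exp (K / 2) / 2 * ∫ ω, |∑ j ∈ range N, ξ j ω ^ 2 - v| ∂μ := by
  have hδ0 : ∀ ω : Ω, 0 ≤ δ := fun ω => (abs_nonneg _).trans (hb 0 ω)
  have hξ : ∀ j, BM (G (j + 1)) (ξ j) := fun j => ⟨hm j, δ, hb j⟩
  have hξ0 : ∀ j, BM m0 (ξ j) := fun j => (hξ j).mono (G.le _)
  set T : ℕ → Ω → ℂ := fun n ω => ∏ j ∈ range n, (1 + ξ j ω * Complex.I) with hT
  have hre : ∀ n ω, (T (n + 1) ω).re = (T n ω).re - (T n ω).im * ξ n ω := fun n ω => by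
    simp only [hT, prod_range_succ]
    simp
  have him : ∀ n ω, (T (n + 1) ω).im = (T n ω).im + (T n ω).re * ξ n ω := fun n ω => by
    simp only [hT, prod_range_succ]
    simp
    ring
  have hBM : ∀ n, BM (G n) (fun ω => (T n ω).re) ∧ BM (G n) (fun ω => (T n ω).im) := by
    intro n
    induction n with
    | zero => simpa [hT] using ⟨BM.const (m := G 0) 1, BM.const (m := G 0) 0⟩
    | succ k ih =>
      simp only [hre, him]
      have h1 := ih.1.mono (G.mono (Nat.le_succ k))
      have h2 := ih.2.mono (G.mono (Nat.le_succ k))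
      exact ⟨h1.sub (h2.mul (hξ k)), h2.add (h1.mul (hξ k))⟩
  have hBM0 : ∀ n, BM m0 (fun ω => (T n ω).re) ∧ BM m0 (fun ω => (T n ω).im) := fun n =>
    ⟨(hBM n).1.mono (G.le _), (hBM n).2.mono (G.le _)⟩
  have hint : ∀ n, ∫ ω, (T n ω).re ∂μ = 1 ∧ ∫ ω, (T n ω).im ∂μ = 0 := by
    intro n
    induction n with
    | zero => simp [hT]
    | succ k ih =>
      simp only [hre, him]
      rw [integral_sub (hBM0 k).1.int ((hBM0 k).2.mul (hξ0 k)).int,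
        integral_add (hBM0 k).2.int ((hBM0 k).1.mul (hξ0 k)).int, horth k _ (hBM k).1,
        horth k _ (hBM k).2, ih.1, ih.2]
      simp
  have hTmeas : Measurable (T N) := by
    have : T N = fun ω => (((T N ω).re : ℝ) : ℂ) + ((T N ω).im : ℝ) * Complex.I := by
      funext ω; simp
    rw [this]
    have h1 := (hBM0 N).1.1
    have h2 := (hBM0 N).2.1
    fun_prop
  have hTb : ∀ ω, ‖T N ω‖ ≤ Real.exp (K / 2) := fun ω => by
    simp only [hT, norm_prod]
    calc _ ≤ ∏ j ∈ range N, Real.exp (ξ j ω ^ 2 / 2) :=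
          prod_le_prod (fun _ _ => norm_nonneg _) fun j _ => norm_one_add_sq_le _
      _ = Real.exp ((∑ j ∈ range N, ξ j ω ^ 2) / 2) := by rw [← Real.exp_sum, sum_div]
      _ ≤ _ := Real.exp_le_exp.2 (by linarith [hK ω])
  have hTint : Integrable (T N) μ :=
    Integrable.of_bound hTmeas.aestronglyMeasurable _ (Eventually.of_forall hTb)
  have hT1 : ∫ ω, T N ω ∂μ = 1 := by
    rw [← integral_re_add_im hTint]
    simp [(hint N).1, (hint N).2]
  set Q : Ω → ℝ := fun ω => ∑ j ∈ range N, ξ j ω ^ 2 with hQ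
  have hQBM : BM m0 Q := BM.sum N fun j _ => (hξ0 j).pow 2
  have hQ0 : ∀ ω, 0 ≤ Q ω := fun ω => sum_nonneg fun _ _ => sq_nonneg _
  have hsumBM : BM m0 (fun ω => ∑ j ∈ range N, ξ j ω) := BM.sum N fun j _ => hξ0 j
  -- pointwise bound
  have hpt : ∀ ω, ‖Complex.exp ((∑ j ∈ range N, ξ j ω : ℝ) * Complex.I) -
      T N ω * (Real.exp (-v / 2) : ℝ)‖ ≤ 2 * δ * K + Real.exp (K / 2) / 2 * |Q ω - v| := by
    intro ω
    have h1 : Complex.exp ((∑ j ∈ range N, ξ j ω : ℝ) * Complex.I) =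
        ∏ j ∈ range N, Complex.exp (ξ j ω * Complex.I) := by
      rw [← Complex.exp_sum, ← sum_mul]
      push_cast
      rfl
    have h2 : T N ω * (Real.exp (-(Q ω) / 2) : ℝ) =
        ∏ j ∈ range N, ((1 + ξ j ω * Complex.I) * (Real.exp (-(ξ j ω ^ 2) / 2) : ℝ)) := by
      rw [prod_mul_distrib]
      congr 1
      rw [← Complex.ofReal_prod, ← Real.exp_sum, ← sum_div, sum_neg_distrib]
    have h3 := prod_diff (fun j => Complex.exp (ξ j ω * Complex.I))
      (fun j => (1 + ξ j ω * Complex.I) * (Real.exp (-(ξ j ω ^ 2) / 2) : ℝ))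
      (fun j => by rw [Complex.norm_exp_ofReal_mul_I])
      (fun j => by
        rw [norm_mul, Complex.norm_real, Real.norm_eq_abs, Real.abs_exp]
        calc _ ≤ Real.exp (ξ j ω ^ 2 / 2) * Real.exp (-(ξ j ω ^ 2) / 2) := by
              gcongr
              exact norm_one_add_sq_le _
          _ = 1 := by rw [← Real.exp_add, ← Real.exp_zero]; congr 1; ring) N
    rw [← h1, ← h2] at h3
    have h4 : ∑ j ∈ range N, ‖Complex.exp (ξ j ω * Complex.I) -
        (1 + ξ j ω * Complex.I) * (Real.exp (-(ξ j ω ^ 2) / 2) : ℝ)‖ ≤ 2 * δ * K := by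
      calc _ ≤ ∑ j ∈ range N, 2 * δ * ξ j ω ^ 2 := by
            refine sum_le_sum fun j _ => (exp_cubic _ ((hb j ω).trans hδ)).trans ?_
            have := hb j ω
            have h5 : |ξ j ω| ^ 3 = |ξ j ω| * ξ j ω ^ 2 := by rw [← sq_abs (ξ j ω)]; ring
            rw [h5]
            have : |ξ j ω| * ξ j ω ^ 2 ≤ δ * ξ j ω ^ 2 := by gcongr
            linarith
        _ = 2 * δ * Q ω := by rw [hQ, mul_sum]
        _ ≤ _ := mul_le_mul_of_nonneg_left (hK ω) (by linarith [hδ0 ω])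
    have h5 : ‖T N ω * (Real.exp (-(Q ω) / 2) : ℝ) - T N ω * (Real.exp (-v / 2) : ℝ)‖ ≤
        Real.exp (K / 2) / 2 * |Q ω - v| := by
      rw [← mul_sub, norm_mul, ← Complex.ofReal_sub, Complex.norm_real, Real.norm_eq_abs]
      have key : ∀ p q : ℝ, 0 ≤ p → 0 ≤ q → p ≤ q →
          |Real.exp (-p / 2) - Real.exp (-q / 2)| ≤ |p - q| / 2 := by
        intro p q hp hq hpq
        have e1 : Real.exp (-q / 2) ≤ Real.exp (-p / 2) := Real.exp_le_exp.2 (by linarith)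
        rw [abs_of_nonneg (by linarith), abs_of_nonpos (by linarith)]
        have e2 : Real.exp (-q / 2) = Real.exp (-p / 2) * Real.exp (-(q - p) / 2) := by
          rw [← Real.exp_add]; congr 1; ring
        have e3 := Real.add_one_le_exp (-(q - p) / 2)
        have e4 : Real.exp (-p / 2) ≤ 1 := Real.exp_le_one_iff.2 (by linarith)
        have e5 := Real.exp_pos (-p / 2)
        rw [e2]
        nlinarith
      have h6 : |Real.exp (-(Q ω) / 2) - Real.exp (-v / 2)| ≤ |Q ω - v| / 2 := by
        rcases le_total (Q ω) v with h | h
        · exact key _ _ (hQ0 ω) hv h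
        · rw [abs_sub_comm, abs_sub_comm (Q ω)]
          exact key _ _ hv (hQ0 ω) h
      calc _ ≤ Real.exp (K / 2) * (|Q ω - v| / 2) :=
            mul_le_mul (hTb ω) h6 (abs_nonneg _) (Real.exp_pos _).le
        _ = _ := by ring
    calc _ ≤ _ := norm_sub_le_norm_sub_add_norm_sub _ (T N ω * (Real.exp (-(Q ω) / 2) : ℝ)) _
      _ ≤ _ := add_le_add (h3.trans h4) h5
  have hEint : Integrable (fun ω => Complex.exp ((∑ j ∈ range N, ξ j ω : ℝ) * Complex.I)) μ := by
    refine Integrable.of_bound (C := 1) ?_ (Eventually.of_forall fun ω => ?_)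
    · have := hsumBM.1
      exact Measurable.aestronglyMeasurable (by fun_prop)
    · rw [Complex.norm_exp_ofReal_mul_I]
  have hconst : ((Real.exp (-v / 2) : ℝ) : ℂ) = ∫ ω, T N ω * (Real.exp (-v / 2) : ℝ) ∂μ := by
    rw [integral_mul_const, hT1, one_mul]
  rw [hconst, ← integral_sub hEint (hTint.mul_const _)]
  have hRint : Integrable (fun ω => |Q ω - v|) μ := (hQBM.sub (BM.const v)).abs.int
  calc _ ≤ ∫ ω, (2 * δ * K + Real.exp (K / 2) / 2 * |Q ω - v|) ∂μ :=
        norm_integral_le_of_norm_le ((integrable_const _).add (hRint.const_mul _))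
          (Eventually.of_forall hpt)
    _ = _ := by
      rw [integral_add (integrable_const _) (hRint.const_mul _), integral_const_mul (Real.exp (K / 2) / 2)]
      simp [hQ]


/-- The structural facts about the walk used in the proof, with `y j = S (j+1) / (j+1)` and
`e j = X (j+2) - a * y j`. -/
structure ERWData {m0 : MeasurableSpace Ω} (μ : Measure Ω) (G : Filtration ℕ m0)
    (y e : ℕ → Ω → ℝ) (a : ℝ) : Prop where
  ha1 : -1 ≤ a
  ha2 : a < 1 / 2
  y0 : ∀ ω, y 0 ω ^ 2 = 1
  hx : ∀ j ω, (a * y j ω + e j ω) ^ 2 = 1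
  hrec : ∀ (j : ℕ) ω, ((j : ℝ) + 2) * y (j + 1) ω = (j + 1) * y j ω + (a * y j ω + e j ω)
  ybound : ∀ j ω, |y j ω| ≤ 1
  ymeas : ∀ j, Measurable[G j] (y j)
  emeas : ∀ j, Measurable[G (j + 1)] (e j)
  orth : ∀ j g, BM (G j) g → ∫ ω, g ω * e j ω ∂μ = 0

set_option linter.unusedSectionVars false

namespace ERWData

variable {m0 : MeasurableSpace Ω} {μ : Measure Ω} [IsProbabilityMeasure μ] {G : Filtration ℕ m0}
  {y e : ℕ → Ω → ℝ} {a : ℝ}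

lemma ebound (h : ERWData μ G y e a) (j : ℕ) (ω : Ω) : |e j ω| ≤ 2 := by
  have h1 : |a * y j ω + e j ω| ≤ 1 := by
    rw [← sq_le_one_iff_abs_le_one]; exact (h.hx j ω).le
  have h2 : |a * y j ω| ≤ 1 := by
    rw [abs_mul]
    exact mul_le_one₀ (abs_le.2 ⟨h.ha1, by linarith [h.ha2]⟩) (abs_nonneg _) (h.ybound j ω)
  rw [abs_le] at *
  constructor <;> linarith [h1.1, h1.2, h2.1, h2.2]

lemma yBM (h : ERWData μ G y e a) (j : ℕ) : BM (G j) (y j) := ⟨h.ymeas j, 1, h.ybound j⟩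
lemma eBM (h : ERWData μ G y e a) (j : ℕ) : BM (G (j + 1)) (e j) := ⟨h.emeas j, 2, h.ebound j⟩
lemma yBM0 (h : ERWData μ G y e a) (j : ℕ) : BM m0 (y j) := (h.yBM j).mono (G.le _)
lemma eBM0 (h : ERWData μ G y e a) (j : ℕ) : BM m0 (e j) := (h.eBM j).mono (G.le _)

lemma m2_rec (h : ERWData μ G y e a) (j : ℕ) :
    ((j : ℝ) + 2) ^ 2 * ∫ ω, y (j + 1) ω ^ 2 ∂μ =
      (((j : ℝ) + 1) ^ 2 + 2 * a * (j + 1)) * ∫ ω, y j ω ^ 2 ∂μ + 1 := by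
  have h1 : ∀ ω, ((j : ℝ) + 2) ^ 2 * y (j + 1) ω ^ 2 =
      (((j : ℝ) + 1) ^ 2 + 2 * a * (j + 1)) * y j ω ^ 2 + 1
        + (2 * (j + 1)) * (y j ω * e j ω) := fun ω => by
    have := h.hx j ω
    rw [← mul_pow, h.hrec]
    linear_combination this
  rw [← integral_const_mul]
  simp_rw [h1]
  have b1 : ∀ c : ℝ, BM m0 (fun ω => c * y j ω ^ 2) := fun c => (BM.const c).mul ((h.yBM0 j).pow 2)
  have b2 : ∀ c : ℝ, BM m0 (fun ω => c * (y j ω * e j ω)) := fun c =>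
    (BM.const c).mul ((h.yBM0 j).mul (h.eBM0 j))
  rw [integral_add ((b1 _).add (BM.const _)).int (b2 _).int,
    integral_add (b1 _).int (BM.const (m := m0) _).int, integral_const_mul, integral_const_mul,
    h.orth j _ (h.yBM j)]
  simp

lemma m4_rec (h : ERWData μ G y e a) (j : ℕ) :
    ((j : ℝ) + 2) ^ 4 * ∫ ω, y (j + 1) ω ^ 4 ∂μ =
      (((j : ℝ) + 1) ^ 4 + 4 * a * (j + 1) ^ 3) * ∫ ω, y j ω ^ 4 ∂μ +
      (6 * (j + 1) ^ 2 + 4 * a * (j + 1)) * ∫ ω, y j ω ^ 2 ∂μ + 1 := by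
  have h1 : ∀ ω, ((j : ℝ) + 2) ^ 4 * y (j + 1) ω ^ 4 =
      (((j : ℝ) + 1) ^ 4 + 4 * a * (j + 1) ^ 3) * y j ω ^ 4 +
      (6 * (j + 1) ^ 2 + 4 * a * (j + 1)) * y j ω ^ 2 + 1
        + (4 * (j + 1) ^ 3) * (y j ω ^ 3 * e j ω) + (4 * (j + 1)) * (y j ω * e j ω) := fun ω => by
    have := h.hx j ω
    rw [← mul_pow, h.hrec]
    generalize hx : a * y j ω + e j ω = x at *
    have he : e j ω = x - a * y j ω := by linarith
    rw [he]
    linear_combination (6 * ((j : ℝ) + 1) ^ 2 * y j ω ^ 2 + 4 * (j + 1) * y j ω * x + x ^ 2 + 1)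
      * this
  rw [← integral_const_mul]
  simp_rw [h1]
  have b1 : ∀ c : ℝ, BM m0 (fun ω => c * y j ω ^ 2) := fun c => (BM.const c).mul ((h.yBM0 j).pow 2)
  have b4 : ∀ c : ℝ, BM m0 (fun ω => c * y j ω ^ 4) := fun c => (BM.const c).mul ((h.yBM0 j).pow 4)
  have b2 : ∀ c : ℝ, BM m0 (fun ω => c * (y j ω * e j ω)) := fun c =>
    (BM.const c).mul ((h.yBM0 j).mul (h.eBM0 j))
  have b3 : ∀ c : ℝ, BM m0 (fun ω => c * (y j ω ^ 3 * e j ω)) := fun c =>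
    (BM.const c).mul (((h.yBM0 j).pow 3).mul (h.eBM0 j))
  rw [integral_add ((((b4 _).add (b1 _)).add (BM.const _)).add (b3 _)).int (b2 _).int,
    integral_add (((b4 _).add (b1 _)).add (BM.const _)).int (b3 _).int,
    integral_add ((b4 _).add (b1 _)).int (BM.const (m := m0) _).int,
    integral_add (b4 _).int (b1 _).int,
    integral_const_mul, integral_const_mul, integral_const_mul, integral_const_mul,
    h.orth j _ (h.yBM j), h.orth j _ ((h.yBM j).pow 3)]
  simp

lemma m2_bound (h : ERWData μ G y e a) : ∃ C : ℝ, 1 ≤ C ∧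
    ∀ j : ℕ, ∫ ω, y j ω ^ 2 ∂μ ≤ C / (j + 1) := by
  set b := max a 0 with hb
  have hb0 : 0 ≤ b := le_max_right _ _
  have hab : a ≤ b := le_max_left _ _
  have hb1 : b < 1 / 2 := max_lt h.ha2 (by norm_num)
  set C := 1 / (1 - 2 * b) with hC
  have hpos : 0 < 1 - 2 * b := by linarith
  have hC2 : C * (1 - 2 * b) = 1 := by rw [hC]; field_simp
  have hC1 : 1 ≤ C := by rw [hC, le_div_iff₀ hpos]; linarith
  refine ⟨C, hC1, fun j => ?_⟩
  induction j with
  | zero => simpa [h.y0] using hC1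
  | succ j ih =>
    have hr := h.m2_rec j
    have hj : (0 : ℝ) ≤ j := Nat.cast_nonneg j
    have hm : 0 ≤ ∫ ω, y j ω ^ 2 ∂μ := integral_nonneg fun _ => sq_nonneg _
    generalize (∫ ω, y j ω ^ 2 ∂μ) = m at *
    generalize (∫ ω, y (j + 1) ω ^ 2 ∂μ) = m' at *
    rw [le_div_iff₀ (by positivity)] at ih
    push_cast
    rw [le_div_iff₀ (by positivity)]
    have h3 : ((j : ℝ) + 2) ^ 2 * m' ≤ C * (j + 2) := by
      rw [hr]
      have : ((j : ℝ) + 1) ^ 2 * m + 2 * a * (j + 1) * m ≤ (j + 1 + 2 * b) * C := by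
        have e1 : 2 * a * (j + 1) * m ≤ 2 * b * (j + 1) * m := by gcongr
        nlinarith
      nlinarith
    have : ((j : ℝ) + 2) * (m' * (j + 2)) ≤ (j + 2) * C := by linarith
    have := le_of_mul_le_mul_left this (by positivity)
    linarith

lemma m4_bound (h : ERWData μ G y e a) : ∃ D : ℝ, 0 ≤ D ∧
    ∀ j : ℕ, ∫ ω, y j ω ^ 4 ∂μ ≤ D / (j + 1) ^ 2 := by
  obtain ⟨C, hC1, hC⟩ := h.m2_bound
  set b := max a 0 with hb
  have hb0 : 0 ≤ b := le_max_right _ _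
  have hab : a ≤ b := le_max_left _ _
  have hb1 : b < 1 / 2 := max_lt h.ha2 (by norm_num)
  have hpos : 0 < 1 - 2 * b := by linarith
  set D := 6 * C / (1 - 2 * b) with hD
  have hD2 : D * (1 - 2 * b) = 6 * C := by rw [hD]; field_simp
  have hD1 : 1 ≤ D := by rw [hD, le_div_iff₀ hpos]; linarith
  refine ⟨D, by linarith, fun j => ?_⟩
  induction j with
  | zero =>
    have : ∀ ω, y 0 ω ^ 4 = 1 := fun ω => by
      have := h.y0 ω
      calc y 0 ω ^ 4 = (y 0 ω ^ 2) ^ 2 := by ring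
        _ = 1 := by rw [this]; norm_num
    simpa [this] using hD1
  | succ j ih =>
    have hr := h.m4_rec j
    have hj : (0 : ℝ) ≤ j := Nat.cast_nonneg j
    have hm : 0 ≤ ∫ ω, y j ω ^ 2 ∂μ := integral_nonneg fun _ => sq_nonneg _
    have hq : 0 ≤ ∫ ω, y j ω ^ 4 ∂μ := integral_nonneg fun _ => by positivity
    have hmC := hC j
    generalize (∫ ω, y j ω ^ 2 ∂μ) = m at *
    generalize (∫ ω, y j ω ^ 4 ∂μ) = q at *
    generalize (∫ ω, y (j + 1) ω ^ 4 ∂μ) = q' at *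
    rw [le_div_iff₀ (by positivity)] at ih hmC
    push_cast
    rw [le_div_iff₀ (by positivity)]
    set k : ℝ := (j : ℝ) + 1 with hk
    have hk1 : 1 ≤ k := by linarith
    have hk2 : (j : ℝ) + 2 = k + 1 := by rw [hk]; ring
    rw [hk2] at hr
    have h3 : (k + 1) ^ 4 * q' ≤ D * (k + 1) ^ 2 := by
      rw [hr]
      have e1 : 4 * a * k ^ 3 * q ≤ 4 * b * k ^ 3 * q := by gcongr
      have e2 : 4 * a * k * m ≤ 2 * C := by
        have : a * (k * m) ≤ (1 / 2) * (k * m) := by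
          have := h.ha2
          gcongr
        nlinarith
      have e3 : k ^ 4 * q ≤ k ^ 2 * D := by nlinarith [sq_nonneg k]
      have e4 : 4 * b * k ^ 3 * q ≤ 4 * b * k * D := by
        have : (4 * b * k) * (q * k ^ 2) ≤ (4 * b * k) * D :=
          mul_le_mul_of_nonneg_left ih (by positivity)
        linarith
      have e5 : 6 * k ^ 2 * m ≤ 6 * k * C := by
        have : (6 * k) * (m * k) ≤ (6 * k) * C := mul_le_mul_of_nonneg_left hmC (by positivity)
        linarith
      have e6 : 4 * b * k * D = 2 * k * D - 12 * C * k := by linear_combination (-2 * k) * hD2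
      have e7 : 2 * C ≤ 2 * C * k := by nlinarith
      nlinarith
    have : (k + 1) ^ 2 * (q' * (k + 1) ^ 2) ≤ (k + 1) ^ 2 * D := by linarith
    exact le_of_mul_le_mul_left this (by positivity)

end ERWData


lemma harm_le (N : ℕ) : Real.log (N + 1) ≤ ∑ j ∈ range N, 1 / ((j : ℝ) + 1) ∧
    ∑ j ∈ range N, 1 / ((j : ℝ) + 1) ≤ 1 + Real.log (N + 1) := by
  have e : ((harmonic N : ℚ) : ℝ) = ∑ j ∈ range N, 1 / ((j : ℝ) + 1) := by
    simp [harmonic]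
  have h1 := log_add_one_le_harmonic N
  have h2 := harmonic_le_one_add_log N
  rw [e] at h1 h2
  push_cast at h1
  refine ⟨h1, h2.trans ?_⟩
  rcases Nat.eq_zero_or_pos N with rfl | hN
  · simp
  · have : (0 : ℝ) < N := by exact_mod_cast hN
    have := Real.log_le_log this (by linarith : (N : ℝ) ≤ N + 1)
    linarith

lemma tele_sum (N : ℕ) : ∑ j ∈ range N, 1 / (((j : ℝ) + 1) * (j + 2)) ≤ 1 := by
  have : ∑ j ∈ range N, 1 / (((j : ℝ) + 1) * (j + 2)) = 1 - 1 / (N + 1) := by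
    induction N with
    | zero => simp
    | succ k ih =>
      rw [sum_range_succ, ih]
      push_cast
      field_simp
      ring
  rw [this]
  have : (0 : ℝ) ≤ 1 / (N + 1) := by positivity
  linarith

lemma sq_sum (N : ℕ) : ∑ j ∈ range N, 1 / ((j : ℝ) + 1) ^ 2 ≤ 2 := by
  calc _ ≤ ∑ j ∈ range N, 2 * (1 / (((j : ℝ) + 1) * (j + 2))) := by
        refine sum_le_sum fun j _ => ?_
        have hj : (0 : ℝ) ≤ j := Nat.cast_nonneg j
        rw [mul_one_div, div_le_div_iff₀ (by positivity) (by positivity)]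
        nlinarith
    _ ≤ 2 := by rw [← mul_sum]; linarith [tele_sum N]

lemma log_ge_one {N : ℕ} (hN : 2 ≤ N) : 1 ≤ Real.log (N + 1) := by
  rw [Real.le_log_iff_exp_le (by positivity)]
  have : (2 : ℝ) ≤ N := by exact_mod_cast hN
  linarith [Real.exp_one_lt_d9]

namespace ERWData

variable {m0 : MeasurableSpace Ω} {μ : Measure Ω} [IsProbabilityMeasure μ] {G : Filtration ℕ m0}
  {y e : ℕ → Ω → ℝ} {a : ℝ}

lemma M2_bound (h : ERWData μ G y e a) {C : ℝ}
    (hC : ∀ j : ℕ, ∫ ω, y j ω ^ 2 ∂μ ≤ C / (j + 1)) (N : ℕ) :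
    ∫ ω, (∑ j ∈ range N, y j ω * e j ω) ^ 2 ∂μ ≤ 4 * C * ∑ j ∈ range N, 1 / ((j : ℝ) + 1) := by
  induction N with
  | zero => simp
  | succ k ih =>
    have e1 : ∀ ω, (∑ j ∈ range (k + 1), y j ω * e j ω) ^ 2 =
        (∑ j ∈ range k, y j ω * e j ω) ^ 2 +
        (2 * (∑ j ∈ range k, y j ω * e j ω) * y k ω) * e k ω + (y k ω * e k ω) ^ 2 := fun ω => by
      rw [sum_range_succ]; ring
    simp_rw [e1]
    have bM : BM (G k) (fun ω => ∑ j ∈ range k, y j ω * e j ω) := BM.sum k fun j hj =>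
      ((h.yBM j).mono (G.mono (by omega))).mul ((h.eBM j).mono (G.mono (by omega)))
    have bM' := bM.mono (G.le k)
    have b1 : BM (G k) (fun ω => 2 * (∑ j ∈ range k, y j ω * e j ω) * y k ω) :=
      ((BM.const 2).mul bM).mul (h.yBM k)
    have b2 := (b1.mono (G.le k)).mul (h.eBM0 k)
    have b3 := ((h.yBM0 k).mul (h.eBM0 k)).pow 2
    rw [integral_add ((bM'.pow 2).add b2).int b3.int, integral_add (bM'.pow 2).int b2.int,
      h.orth k _ b1, sum_range_succ]
    have : ∫ ω, (y k ω * e k ω) ^ 2 ∂μ ≤ 4 * ∫ ω, y k ω ^ 2 ∂μ := by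
      rw [← integral_const_mul]
      refine integral_mono b3.int ((BM.const 4).mul ((h.yBM0 k).pow 2)).int fun ω => ?_
      have := sq_le_sq' (by linarith [(abs_le.1 (h.ebound k ω)).1]) (abs_le.1 (h.ebound k ω)).2
      simp only [mul_pow]
      nlinarith [sq_nonneg (y k ω)]
    have h4 := hC k
    have : C / ((k : ℝ) + 1) = C * (1 / (k + 1)) := by ring
    rw [mul_add]
    linarith

lemma A_identity (h : ERWData μ G y e a) (N : ℕ) (ω : Ω) :
    (1 - 2 * a) * ∑ j ∈ range N, y j ω ^ 2 =
      ∑ j ∈ range N, 1 / ((j : ℝ) + 1) + 2 * ∑ j ∈ range N, y j ω * e j ω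
        - (N + 1) * y N ω ^ 2 + 2 - y N ω ^ 2
        - ∑ j ∈ range N, (1 / ((j : ℝ) + 1)) * y (j + 1) ω ^ 2 := by
  induction N with
  | zero => simp [h.y0]; norm_num
  | succ k ih =>
    simp only [sum_range_succ, mul_add]
    rw [ih]
    have h1 := h.hrec k ω
    have h2 := h.hx k ω
    push_cast
    have hk : (k : ℝ) + 1 ≠ 0 := by positivity
    have h3 : e k ω = ((k : ℝ) + 2) * y (k + 1) ω - (k + 1) * y k ω - a * y k ω := by linarith
    rw [h3] at h2 ⊢
    field_simp
    linear_combination h2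

lemma A_L1 (h : ERWData μ G y e a) : ∃ c : ℝ, ∀ N : ℕ, 2 ≤ N →
    ∫ ω, |(∑ j ∈ range N, y j ω ^ 2) / Real.log (N + 1) - 1 / (1 - 2 * a)| ∂μ
      ≤ c / √(Real.log (N + 1)) := by
  obtain ⟨C, hC1, hC⟩ := h.m2_bound
  have hpos : 0 < 1 - 2 * a := by linarith [h.ha2]
  refine ⟨(5 + 10 * C) / (1 - 2 * a), fun N hN => ?_⟩
  have hL := log_ge_one hN
  obtain ⟨hH1, hH2⟩ := harm_le N
  have hM := h.M2_bound hC N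
  set L := Real.log (N + 1) with hLdef
  set r := √L with hr
  have hr1 : 1 ≤ r := by rw [hr, Real.one_le_sqrt]; exact hL
  have hr2 : L = r ^ 2 := by rw [hr, Real.sq_sqrt (by linarith)]
  set H := ∑ j ∈ range N, 1 / ((j : ℝ) + 1) with hH
  have hrp : 0 < r := by linarith
  have hpt : ∀ ω, |(∑ j ∈ range N, y j ω ^ 2) / L - 1 / (1 - 2 * a)| ≤
      (1 / ((1 - 2 * a) * L)) * ((4 + r) + (1 / r) * (∑ j ∈ range N, y j ω * e j ω) ^ 2
        + (N + 1) * y N ω ^ 2 + ∑ j ∈ range N, (1 / ((j : ℝ) + 1)) * y (j + 1) ω ^ 2) := by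
    intro ω
    have hid := h.A_identity N ω
    have e1 : (∑ j ∈ range N, y j ω ^ 2) / L - 1 / (1 - 2 * a) =
        (1 / ((1 - 2 * a) * L)) * ((1 - 2 * a) * ∑ j ∈ range N, y j ω ^ 2 - L) := by
      have : L ≠ 0 := by linarith
      field_simp
    rw [e1, abs_mul, abs_of_nonneg (by positivity : 0 ≤ 1 / ((1 - 2 * a) * L)), hid]
    refine mul_le_mul_of_nonneg_left ?_ (by positivity)
    have hy1 : y N ω ^ 2 ≤ 1 := (sq_le_one_iff_abs_le_one _).2 (h.ybound N ω)
    have hy0 := sq_nonneg (y N ω)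
    have hz0 : 0 ≤ ((N : ℝ) + 1) * y N ω ^ 2 := by positivity
    have hR0 : 0 ≤ ∑ j ∈ range N, (1 / ((j : ℝ) + 1)) * y (j + 1) ω ^ 2 :=
      sum_nonneg fun _ _ => by positivity
    generalize (∑ j ∈ range N, (1 / ((j : ℝ) + 1)) * y (j + 1) ω ^ 2) = R at *
    generalize (∑ j ∈ range N, y j ω * e j ω) = M at *
    generalize ((N : ℝ) + 1) * y N ω ^ 2 = z at *
    have hMr : 2 * |M| ≤ r + (1 / r) * M ^ 2 := by
      have : r + (1 / r) * M ^ 2 - 2 * |M| = (1 / r) * (|M| - r) ^ 2 := by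
        rw [← sq_abs M]
        field_simp
        ring
      have : 0 ≤ (1 / r) * (|M| - r) ^ 2 := by positivity
      linarith
    rw [abs_le]
    constructor <;> linarith [neg_abs_le M, le_abs_self M]
  have bM : BM m0 (fun ω => (1 / r) * (∑ j ∈ range N, y j ω * e j ω) ^ 2) :=
    (BM.const _).mul ((BM.sum N fun j _ => (h.yBM0 j).mul (h.eBM0 j)).pow 2)
  have bz : BM m0 (fun ω => ((N : ℝ) + 1) * y N ω ^ 2) := (BM.const _).mul ((h.yBM0 N).pow 2)
  have bRj : ∀ j : ℕ, BM m0 (fun ω => (1 / ((j : ℝ) + 1)) * y (j + 1) ω ^ 2) := fun j =>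
    (BM.const _).mul ((h.yBM0 (j + 1)).pow 2)
  have bR : BM m0 (fun ω => ∑ j ∈ range N, (1 / ((j : ℝ) + 1)) * y (j + 1) ω ^ 2) :=
    BM.sum N fun j _ => bRj j
  have bc : BM m0 (fun _ : Ω => 4 + r) := BM.const _
  have bA : BM m0 (fun ω => (∑ j ∈ range N, y j ω ^ 2) / L - 1 / (1 - 2 * a)) := by
    simp only [div_eq_mul_inv _ L]
    exact ((BM.sum N fun j _ => (h.yBM0 j).pow 2).mul (BM.const _)).sub (BM.const _)
  calc _ ≤ _ := integral_mono bA.abs.int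
        ((BM.const _).mul (((bc.add bM).add bz).add bR)).int hpt
    _ = (1 / ((1 - 2 * a) * L)) * ((4 + r) +
          (1 / r) * ∫ ω, (∑ j ∈ range N, y j ω * e j ω) ^ 2 ∂μ
        + (N + 1) * ∫ ω, y N ω ^ 2 ∂μ
        + ∑ j ∈ range N, (1 / ((j : ℝ) + 1)) * ∫ ω, y (j + 1) ω ^ 2 ∂μ) := by
      rw [integral_const_mul, integral_add ((bc.add bM).add bz).int bR.int,
        integral_add (bc.add bM).int bz.int, integral_add bc.int bM.int,
        integral_finsetSum _ fun j _ => (bRj j).int, integral_const_mul, integral_const_mul]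
      simp only [integral_const_mul]
      simp
    _ ≤ (1 / ((1 - 2 * a) * L)) * ((5 + 10 * C) * r) := by
      refine mul_le_mul_of_nonneg_left ?_ (by positivity)
      have h1 : (1 / r) * ∫ ω, (∑ j ∈ range N, y j ω * e j ω) ^ 2 ∂μ ≤ 8 * C * r := by
        rw [one_div, inv_mul_le_iff₀ hrp]
        have : 4 * C * H ≤ 4 * C * (1 + r ^ 2) := by
          rw [← hr2]; gcongr
        nlinarith
      have h2 : ((N : ℝ) + 1) * ∫ ω, y N ω ^ 2 ∂μ ≤ C := by
        have := hC N
        rw [le_div_iff₀ (by positivity)] at this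
        linarith
      have h3 : ∑ j ∈ range N, (1 / ((j : ℝ) + 1)) * ∫ ω, y (j + 1) ω ^ 2 ∂μ ≤ C := by
        calc _ ≤ ∑ j ∈ range N, C * (1 / (((j : ℝ) + 1) * (j + 2))) := by
              refine sum_le_sum fun j _ => ?_
              have := hC (j + 1)
              push_cast at this
              calc _ ≤ (1 / ((j : ℝ) + 1)) * (C / (j + 1 + 1)) := by gcongr
                _ = _ := by
                  have : (j : ℝ) + 1 + 1 = j + 2 := by ring
                  rw [this]
                  field_simp
          _ ≤ C := by
            rw [← mul_sum]
            exact mul_le_of_le_one_right (by linarith) (tele_sum N)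
      nlinarith
    _ = _ := by
      rw [hr2]
      field_simp

lemma Q_L1 (h : ERWData μ G y e a) : ∃ c : ℝ, ∀ N : ℕ, 2 ≤ N →
    ∫ ω, |(∑ j ∈ range N, (y j ω * e j ω) ^ 2) / Real.log (N + 1)
        - (∑ j ∈ range N, y j ω ^ 2) / Real.log (N + 1)| ∂μ
      ≤ c / √(Real.log (N + 1)) := by
  obtain ⟨C, hC1, hC⟩ := h.m2_bound
  obtain ⟨D, hD0, hD⟩ := h.m4_bound
  refine ⟨3 * C + 3 * D, fun N hN => ?_⟩
  have hL := log_ge_one hN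
  obtain ⟨hH1, hH2⟩ := harm_le N
  set L := Real.log (N + 1) with hLdef
  set r := √L with hr
  have hr1 : 1 ≤ r := by rw [hr, Real.one_le_sqrt]; exact hL
  have hr2 : L = r ^ 2 := by rw [hr, Real.sq_sqrt (by linarith)]
  have hrp : 0 < r := by linarith
  have hj : ∀ j ω, |(y j ω * e j ω) ^ 2 - y j ω ^ 2| ≤
      (3 / 2 / r) * y j ω ^ 2 + (3 / 2 * r) * y j ω ^ 4 := by
    intro j ω
    have h2 := h.hx j ω
    have hy := h.ybound j ω
    have hx1 : |a * y j ω + e j ω| ≤ 1 := by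
      rw [← sq_le_one_iff_abs_le_one]; exact h2.le
    have ha : |a| ≤ 1 := abs_le.2 ⟨h.ha1, by linarith [h.ha2]⟩
    generalize hx : a * y j ω + e j ω = x at *
    have he : e j ω = x - a * y j ω := by linarith
    rw [he]
    generalize y j ω = u at *
    have e1 : (u * (x - a * u)) ^ 2 - u ^ 2 = u ^ 2 * (u * (a ^ 2 * u - 2 * a * x)) := by
      linear_combination u ^ 2 * h2
    have e2 : |a ^ 2 * u - 2 * a * x| ≤ 3 := by
      refine (abs_sub _ _).trans ?_
      rw [abs_mul, abs_mul, abs_mul, abs_pow, abs_two]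
      have t1 : |a| ^ 2 * |u| ≤ 1 := mul_le_one₀ (pow_le_one₀ (abs_nonneg _) ha) (abs_nonneg _) hy
      have t2 : |a| * |x| ≤ 1 := mul_le_one₀ ha (abs_nonneg _) hx1
      linarith
    rw [e1, abs_mul, abs_mul, abs_of_nonneg (sq_nonneg u)]
    have e3 : u ^ 2 * (|u| * |a ^ 2 * u - 2 * a * x|) ≤ u ^ 2 * (|u| * 3) := by gcongr
    refine e3.trans ?_
    have e4 : (3 / 2 / r) * u ^ 2 + (3 / 2 * r) * u ^ 4 - u ^ 2 * (|u| * 3) =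
        (3 / 2 / r) * u ^ 2 * (r * |u| - 1) ^ 2 := by
      have : u ^ 4 = u ^ 2 * |u| ^ 2 := by rw [sq_abs]; ring
      rw [this]
      field_simp
      ring
    have : 0 ≤ (3 / 2 / r) * u ^ 2 * (r * |u| - 1) ^ 2 := by positivity
    linarith
  have hpt : ∀ ω, |(∑ j ∈ range N, (y j ω * e j ω) ^ 2) / L - (∑ j ∈ range N, y j ω ^ 2) / L| ≤
      (1 / L) * ∑ j ∈ range N, ((3 / 2 / r) * y j ω ^ 2 + (3 / 2 * r) * y j ω ^ 4) := by
    intro ω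
    rw [← sub_div, ← sum_sub_distrib, abs_div, abs_of_nonneg (by linarith : 0 ≤ L), div_eq_inv_mul,
      one_div]
    gcongr
    exact (abs_sum_le_sum_abs _ _).trans (sum_le_sum fun j _ => hj j ω)
  have b1 : ∀ j, BM m0 (fun ω => (3 / 2 / r) * y j ω ^ 2) := fun j =>
    (BM.const _).mul ((h.yBM0 j).pow 2)
  have b2 : ∀ j, BM m0 (fun ω => (3 / 2 * r) * y j ω ^ 4) := fun j =>
    (BM.const _).mul ((h.yBM0 j).pow 4)
  have bL : BM m0 (fun ω => (∑ j ∈ range N, (y j ω * e j ω) ^ 2) / L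
      - (∑ j ∈ range N, y j ω ^ 2) / L) := by
    simp only [div_eq_mul_inv _ L]
    exact ((BM.sum N fun j _ => ((h.yBM0 j).mul (h.eBM0 j)).pow 2).mul (BM.const _)).sub
      ((BM.sum N fun j _ => (h.yBM0 j).pow 2).mul (BM.const _))
  calc _ ≤ _ := integral_mono bL.abs.int
        ((BM.const _).mul (BM.sum N fun j _ => (b1 j).add (b2 j))).int hpt
    _ = (1 / L) * ∑ j ∈ range N, ((3 / 2 / r) * ∫ ω, y j ω ^ 2 ∂μ +
          (3 / 2 * r) * ∫ ω, y j ω ^ 4 ∂μ) := by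
      rw [integral_const_mul, integral_finsetSum _ fun j _ => ((b1 j).add (b2 j)).int]
      congr 1
      refine sum_congr rfl fun j _ => ?_
      rw [integral_add (b1 j).int (b2 j).int, integral_const_mul, integral_const_mul]
    _ ≤ (1 / L) * ∑ j ∈ range N, ((3 / 2 / r * C) * (1 / ((j : ℝ) + 1)) +
          (3 / 2 * r * D) * (1 / ((j : ℝ) + 1) ^ 2)) := by
      refine mul_le_mul_of_nonneg_left (sum_le_sum fun j _ => add_le_add ?_ ?_) (by positivity)
      · calc _ ≤ (3 / 2 / r) * (C / (j + 1)) := by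
              have := hC j
              gcongr
          _ = _ := by ring
      · calc _ ≤ (3 / 2 * r) * (D / (j + 1) ^ 2) := by
              have := hD j
              gcongr
          _ = _ := by ring
    _ ≤ (1 / L) * ((3 / 2 / r * C) * (1 + r ^ 2) + (3 / 2 * r * D) * 2) := by
      rw [sum_add_distrib, ← mul_sum, ← mul_sum, ← hr2]
      have := sq_sum N
      gcongr
    _ ≤ (1 / L) * ((3 * C + 3 * D) * r) := by
      refine mul_le_mul_of_nonneg_left ?_ (by positivity)
      have : (3 / 2 / r * C) * (1 + r ^ 2) ≤ 3 * C * r := by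
        have : (3 / 2 / r * C) * (1 + r ^ 2) = (3 / 2 * C * (1 + r ^ 2)) / r := by ring
        rw [this, div_le_iff₀ hrp]
        nlinarith
      linarith
    _ = _ := by
      rw [hr2]
      field_simp

end ERWData


lemma trunc_sum (u : ℕ → ℝ) (hu : ∀ j, 0 ≤ u j) (B : ℝ) (hB : 0 ≤ B) (N : ℕ) :
    ∑ j ∈ range N, (if ∑ i ∈ range (j + 1), u i ≤ B then (1 : ℝ) else 0) * u j ≤ B := by
  induction N with
  | zero => simpa
  | succ k ih =>
    by_cases hk : ∑ i ∈ range (k + 1), u i ≤ B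
    · refine le_trans (sum_le_sum fun j _ => ?_) hk
      split_ifs
      · simp
      · simpa using hu j
    · rw [sum_range_succ, if_neg hk]
      simpa using ih

namespace ERWData

variable {m0 : MeasurableSpace Ω} {μ : Measure Ω} [IsProbabilityMeasure μ] {G : Filtration ℕ m0}
  {y e : ℕ → Ω → ℝ} {a : ℝ}

lemma char_bound (h : ERWData μ G y e a) (t : ℝ) : ∃ c : ℝ, ∀ N : ℕ, 2 ≤ N →
    2 * |t| ≤ √(Real.log (N + 1)) →
    ‖∫ ω, Complex.exp ((t * ((∑ j ∈ range N, y j ω * e j ω) / √(Real.log (N + 1))) : ℝ)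
      * Complex.I) ∂μ - (Real.exp (-(t ^ 2 * (1 / (1 - 2 * a))) / 2) : ℝ)‖
      ≤ c / √(Real.log (N + 1)) := by
  obtain ⟨c1, hc1⟩ := h.A_L1
  obtain ⟨c2, hc2⟩ := h.Q_L1
  have hpos : 0 < 1 - 2 * a := by linarith [h.ha2]
  set v := 1 / (1 - 2 * a) with hv
  have hv0 : 0 < v := by positivity
  set K := 4 * t ^ 2 * (v + 1) with hK
  refine ⟨2 * c1 + (4 * |t| * K + Real.exp (K / 2) / 2 * (t ^ 2 * (c2 + (1 + v) * c1))),
    fun N hN ht => ?_⟩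
  have hA := hc1 N hN
  have hQ := hc2 N hN
  have hL := log_ge_one hN
  set L := Real.log (N + 1) with hLdef
  set r := √L with hr
  have hr1 : 1 ≤ r := by rw [hr, Real.one_le_sqrt]; exact hL
  have hr2 : L = r ^ 2 := by rw [hr, Real.sq_sqrt (by linarith)]
  have hrp : 0 < r := by linarith
  have hLp : 0 < L := by linarith
  set B := (v + 1) * L with hB
  set χ : ℕ → Ω → ℝ := fun j ω => if ∑ i ∈ range (j + 1), y i ω ^ 2 ≤ B then (1 : ℝ) else 0 with hχ
  have hχ01 : ∀ j ω, χ j ω = 0 ∨ χ j ω = 1 := fun j ω => by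
    simp only [hχ]; split_ifs <;> simp
  have bχ : ∀ j, BM (G j) (χ j) := fun j => by
    refine ⟨Measurable.ite ?_ measurable_const measurable_const, 1, fun ω => ?_⟩
    · have : BM (G j) (fun ω => ∑ i ∈ range (j + 1), y i ω ^ 2) := BM.sum _ fun i hi =>
        ((h.yBM i).mono (G.mono (by omega))).pow 2
      exact this.1 measurableSet_Iic
    · rcases hχ01 j ω with h | h <;> simp [h]
  set ξ : ℕ → Ω → ℝ := fun j ω => (t / r) * (χ j ω * (y j ω * e j ω)) with hξ
  have hyA : ∀ ω, ∑ j ∈ range N, χ j ω * y j ω ^ 2 ≤ B := fun ω =>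
    trunc_sum (fun j => y j ω ^ 2) (fun _ => sq_nonneg _) B (by positivity) N
  have hχsq : ∀ j ω, χ j ω ^ 2 = χ j ω := fun j ω => by
    rcases hχ01 j ω with h | h <;> simp [h]
  have hξsq : ∀ ω, ∑ j ∈ range N, ξ j ω ^ 2 =
      t ^ 2 * ((∑ j ∈ range N, χ j ω * (y j ω * e j ω) ^ 2) / L) := fun ω => by
    rw [sum_div, mul_sum]
    refine sum_congr rfl fun j _ => ?_
    simp only [hξ]
    rw [mul_pow, mul_pow, hχsq, hr2]
    field_simp
  have hξb : ∀ j ω, |ξ j ω| ≤ 2 * |t| / r := fun j ω => by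
    simp only [hξ]
    rw [abs_mul, abs_mul, abs_mul, abs_div, abs_of_pos hrp]
    have h1 : |χ j ω| ≤ 1 := by rcases hχ01 j ω with h | h <;> simp [h]
    have h2 : |y j ω| * |e j ω| ≤ 1 * 2 :=
      mul_le_mul (h.ybound j ω) (h.ebound j ω) (abs_nonneg _) (by norm_num)
    have h3 : |χ j ω| * (|y j ω| * |e j ω|) ≤ 1 * (1 * 2) :=
      mul_le_mul h1 h2 (by positivity) (by norm_num)
    calc _ ≤ |t| / r * (1 * (1 * 2)) := by gcongr
      _ = _ := by ring
  have hξK : ∀ ω, ∑ j ∈ range N, ξ j ω ^ 2 ≤ K := fun ω => by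
    rw [hξsq]
    have h1 : ∑ j ∈ range N, χ j ω * (y j ω * e j ω) ^ 2 ≤ 4 * B := by
      calc _ ≤ ∑ j ∈ range N, 4 * (χ j ω * y j ω ^ 2) := by
            refine sum_le_sum fun j _ => ?_
            have h2 := sq_le_sq' (by linarith [(abs_le.1 (h.ebound j ω)).1])
              (abs_le.1 (h.ebound j ω)).2
            have h3 : 0 ≤ χ j ω * y j ω ^ 2 := by
              rcases hχ01 j ω with h | h <;> simp [h, sq_nonneg]
            rw [mul_pow]
            nlinarith
        _ ≤ _ := by rw [← mul_sum]; linarith [hyA ω]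
    have h2 : (∑ j ∈ range N, χ j ω * (y j ω * e j ω) ^ 2) / L ≤ 4 * (v + 1) := by
      rw [div_le_iff₀ hLp]; linarith
    calc _ ≤ t ^ 2 * (4 * (v + 1)) := by gcongr
      _ = K := by rw [hK]; ring
  have hδ : 2 * |t| / r ≤ 1 := by rw [div_le_one hrp]; exact ht
  have hcore := mart_core μ G ξ (2 * |t| / r) K (t ^ 2 * v) hδ hξb
    (fun j => (((bχ j).mono (G.mono (Nat.le_succ j))).mul
      (((h.yBM j).mono (G.mono (Nat.le_succ j))).mul (h.eBM j))).1.const_mul _)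
    (fun j g hg => by
      have := h.orth j (fun ω => g ω * ((t / r) * (χ j ω * y j ω)))
        (hg.mul ((BM.const _).mul ((bχ j).mul (h.yBM j))))
      rw [← this]
      congr 1
      funext ω
      simp only [hξ]
      ring) N hξK (by positivity)
  have bQ : BM m0 (fun ω => (∑ j ∈ range N, (y j ω * e j ω) ^ 2) / L) := by
    simp only [div_eq_mul_inv _ L]
    exact (BM.sum N fun j _ => ((h.yBM0 j).mul (h.eBM0 j)).pow 2).mul (BM.const _)
  have bA : BM m0 (fun ω => (∑ j ∈ range N, y j ω ^ 2) / L) := by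
    simp only [div_eq_mul_inv _ L]
    exact (BM.sum N fun j _ => (h.yBM0 j).pow 2).mul (BM.const _)
  have bξ : ∀ j, BM m0 (ξ j) := fun j =>
    (BM.const _).mul (((bχ j).mono (G.le _)).mul ((h.yBM0 j).mul (h.eBM0 j)))
  have bAv := (bA.sub (BM.const v)).abs
  have bQA := (bQ.sub bA).abs
  -- good event
  have hgood : ∀ ω, ∑ j ∈ range N, y j ω ^ 2 ≤ B → ∀ j ∈ range N, χ j ω = 1 := by
    intro ω hω j hj
    simp only [hχ]
    refine if_pos (le_trans ?_ hω)
    exact sum_le_sum_of_subset_of_nonneg (range_mono (by simpa using hj)) fun _ _ _ => sq_nonneg _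
  have hbad : ∀ ω, ¬ ∑ j ∈ range N, y j ω ^ 2 ≤ B →
      1 ≤ |(∑ j ∈ range N, y j ω ^ 2) / L - v| := by
    intro ω hω
    push Not at hω
    have : v + 1 < (∑ j ∈ range N, y j ω ^ 2) / L := by rw [lt_div_iff₀ hLp]; exact hω
    exact le_trans (by linarith) (le_abs_self _)
  have hE1 : ∫ ω, |∑ j ∈ range N, ξ j ω ^ 2 - t ^ 2 * v| ∂μ ≤
      t ^ 2 * (c2 / r + (1 + v) * (c1 / r)) := by
    have hpt : ∀ ω, |∑ j ∈ range N, ξ j ω ^ 2 - t ^ 2 * v| ≤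
        t ^ 2 * (|(∑ j ∈ range N, (y j ω * e j ω) ^ 2) / L - (∑ j ∈ range N, y j ω ^ 2) / L|
          + (1 + v) * |(∑ j ∈ range N, y j ω ^ 2) / L - v|) := by
      intro ω
      rw [hξsq, ← mul_sub, abs_mul, abs_of_nonneg (sq_nonneg t)]
      refine mul_le_mul_of_nonneg_left ?_ (sq_nonneg t)
      by_cases hω : ∑ j ∈ range N, y j ω ^ 2 ≤ B
      · have : ∑ j ∈ range N, χ j ω * (y j ω * e j ω) ^ 2 = ∑ j ∈ range N, (y j ω * e j ω) ^ 2 :=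
          sum_congr rfl fun j hj => by rw [hgood ω hω j hj, one_mul]
        rw [this]
        have h1 := abs_sub_le ((∑ j ∈ range N, (y j ω * e j ω) ^ 2) / L)
          ((∑ j ∈ range N, y j ω ^ 2) / L) v
        have h2 : 0 ≤ v * |(∑ j ∈ range N, y j ω ^ 2) / L - v| := by positivity
        linarith
      · have h1 := abs_sub_le ((∑ j ∈ range N, (y j ω * e j ω) ^ 2) / L)
          ((∑ j ∈ range N, y j ω ^ 2) / L) v
        have h2 := hbad ω hω
        have h3 : v * 1 ≤ v * |(∑ j ∈ range N, y j ω ^ 2) / L - v| := by gcongr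
        have h4 : 0 ≤ (∑ j ∈ range N, χ j ω * (y j ω * e j ω) ^ 2) / L := by
          refine div_nonneg (sum_nonneg fun j _ => ?_) hLp.le
          rcases hχ01 j ω with h | h <;> simp [h]; positivity
        have h5 : (∑ j ∈ range N, χ j ω * (y j ω * e j ω) ^ 2) / L ≤
            (∑ j ∈ range N, (y j ω * e j ω) ^ 2) / L := by
          refine div_le_div_of_nonneg_right (sum_le_sum fun j _ => ?_) hLp.le
          rcases hχ01 j ω with h | h <;> simp [h]; positivity
        have h6 := le_abs_self ((∑ j ∈ range N, (y j ω * e j ω) ^ 2) / L - v)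
        have h7 := abs_nonneg ((∑ j ∈ range N, (y j ω * e j ω) ^ 2) / L - v)
        rw [abs_le]
        constructor <;> linarith
    calc _ ≤ _ := integral_mono
          ((BM.sum N fun j _ => (bξ j).pow 2).sub (BM.const _)).abs.int
          ((BM.const _).mul (bQA.add ((BM.const _).mul bAv))).int hpt
      _ = t ^ 2 * (∫ ω, |(∑ j ∈ range N, (y j ω * e j ω) ^ 2) / L
            - (∑ j ∈ range N, y j ω ^ 2) / L| ∂μ
            + (1 + v) * ∫ ω, |(∑ j ∈ range N, y j ω ^ 2) / L - v| ∂μ) := by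
        rw [integral_const_mul, integral_add bQA.int ((BM.const _).mul bAv).int,
          integral_const_mul]
      _ ≤ _ := by gcongr
  have hE2 : ‖∫ ω, Complex.exp ((t * ((∑ j ∈ range N, y j ω * e j ω) / r) : ℝ) * Complex.I) ∂μ
      - ∫ ω, Complex.exp ((∑ j ∈ range N, ξ j ω : ℝ) * Complex.I) ∂μ‖ ≤ 2 * (c1 / r) := by
    have hi : ∀ f : Ω → ℝ, BM m0 f →
        Integrable (fun ω => Complex.exp ((f ω : ℝ) * Complex.I)) μ := by
      intro f hf
      refine Integrable.of_bound (C := 1) ?_ (Eventually.of_forall fun ω => ?_)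
      · have := hf.1
        exact Measurable.aestronglyMeasurable (by fun_prop)
      · rw [Complex.norm_exp_ofReal_mul_I]
    have bM : BM m0 (fun ω => t * ((∑ j ∈ range N, y j ω * e j ω) / r)) := by
      simp only [div_eq_mul_inv _ r]
      exact (BM.const _).mul ((BM.sum N fun j _ => (h.yBM0 j).mul (h.eBM0 j)).mul (BM.const _))
    rw [← integral_sub (hi _ bM) (hi _ (BM.sum N fun j _ => bξ j))]
    calc _ ≤ ∫ ω, 2 * |(∑ j ∈ range N, y j ω ^ 2) / L - v| ∂μ := by
          refine norm_integral_le_of_norm_le ((BM.const 2).mul bAv).int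
            (Eventually.of_forall fun ω => ?_)
          by_cases hω : ∑ j ∈ range N, y j ω ^ 2 ≤ B
          · have : t * ((∑ j ∈ range N, y j ω * e j ω) / r) = ∑ j ∈ range N, ξ j ω := by
              rw [sum_div, mul_sum]
              refine sum_congr rfl fun j hj => ?_
              simp only [hξ]
              rw [hgood ω hω j hj]
              ring
            rw [this, sub_self, norm_zero]
            positivity
          · refine (norm_sub_le _ _).trans ?_
            rw [Complex.norm_exp_ofReal_mul_I, Complex.norm_exp_ofReal_mul_I]
            linarith [hbad ω hω]
      _ ≤ _ := by rw [integral_const_mul]; gcongr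
  calc _ ≤ _ := norm_sub_le_norm_sub_add_norm_sub _
        (∫ ω, Complex.exp ((∑ j ∈ range N, ξ j ω : ℝ) * Complex.I) ∂μ) _
    _ ≤ 2 * (c1 / r) + (2 * (2 * |t| / r) * K + Real.exp (K / 2) / 2 *
          (t ^ 2 * (c2 / r + (1 + v) * (c1 / r)))) := by
      refine add_le_add hE2 (hcore.trans ?_)
      gcongr
    _ = _ := by ring

lemma tendsto_r : Tendsto (fun N : ℕ => √(Real.log ((N : ℝ) + 1))) atTop atTop := by
  have h1 : Tendsto (fun N : ℕ => (N : ℝ) + 1) atTop atTop :=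
    tendsto_atTop_add_const_right _ _ tendsto_natCast_atTop_atTop
  exact Real.tendsto_sqrt_atTop.comp (Real.tendsto_log_atTop.comp h1)

lemma clt (h : ERWData μ G y e a) :
    TendstoInDistribution
      (fun (N : ℕ) ω => (∑ j ∈ range N, y j ω * e j ω) / √(Real.log ((N : ℝ) + 1))) atTop
      (id : ℝ → ℝ) (fun _ => μ) (gaussianReal 0 (1 / (1 - 2 * a)).toNNReal) where
  forall_aemeasurable N := by
    have := (BM.sum N fun j _ => (h.yBM0 j).mul (h.eBM0 j)).1
    exact (this.div_const _).aemeasurable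
  aemeasurable_limit := aemeasurable_id
  tendsto := by
    refine ProbabilityMeasure.tendsto_iff_tendsto_charFun.2 fun t ↦ ?_
    have hpos : 0 < 1 - 2 * a := by linarith [h.ha2]
    have e0 : charFun (Measure.map id (gaussianReal 0 (1 / (1 - 2 * a)).toNNReal)) t =
        (Real.exp (-(t ^ 2 * (1 / (1 - 2 * a))) / 2) : ℝ) := by
      rw [Measure.map_id, charFun_gaussianReal, Complex.ofReal_exp]
      congr 1
      have : (((1 / (1 - 2 * a)).toNNReal : ℝ≥0) : ℝ) = 1 / (1 - 2 * a) :=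
        Real.coe_toNNReal _ (by positivity)
      rw [this]
      push_cast
      ring
    simp only [ProbabilityMeasure.coe_mk]
    rw [e0]
    obtain ⟨c, hc⟩ := h.char_bound t
    rw [tendsto_iff_norm_sub_tendsto_zero]
    refine squeeze_zero' (Eventually.of_forall fun _ => norm_nonneg _) ?_
      (tendsto_r.const_div_atTop c)
    filter_upwards [eventually_ge_atTop 2, tendsto_r.eventually_ge_atTop (2 * |t|)] with N h1 h2
    have e1 : charFun (Measure.map
        (fun ω => (∑ j ∈ range N, y j ω * e j ω) / √(Real.log ((N : ℝ) + 1))) μ) t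
        = ∫ ω, Complex.exp ((t * ((∑ j ∈ range N, y j ω * e j ω) / √(Real.log (N + 1))) : ℝ)
          * Complex.I) ∂μ := by
      rw [charFun_apply_real, integral_map]
      · push_cast
        rfl
      · have := (BM.sum N fun j _ => (h.yBM0 j).mul (h.eBM0 j)).1
        exact (this.div_const _).aemeasurable
      · exact Measurable.aestronglyMeasurable (by fun_prop)
    rw [e1]
    exact hc N h1 h2

lemma inv_meas (h : ERWData μ G y e a) :
    TendstoInMeasure μ
      (fun (N : ℕ) ω => Real.log ((N : ℝ) + 1) / (2 * ∑ j ∈ range N, y j ω ^ 2)) atTop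
      (fun _ => (1 - 2 * a) / 2) := by
  rw [tendstoInMeasure_iff_measureReal_norm]
  intro ε hε
  obtain ⟨c, hc⟩ := h.A_L1
  have hpos : 0 < 1 - 2 * a := by linarith [h.ha2]
  set v := 1 / (1 - 2 * a) with hv
  have hv0 : 0 < v := by positivity
  have hv1 : (1 - 2 * a) / 2 = 1 / (2 * v) := by rw [hv]; field_simp
  set η := min (v / 2) (ε * v ^ 2) with hη
  have hη0 : 0 < η := lt_min (by positivity) (by positivity)
  refine squeeze_zero' (Eventually.of_forall fun _ => measureReal_nonneg) ?_
      (tendsto_r.const_div_atTop (c / η))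
  filter_upwards [eventually_ge_atTop 2] with N hN
  have hA := hc N hN
  have hL := log_ge_one hN
  set L := Real.log ((N : ℝ) + 1) with hLdef
  have hLp : 0 < L := by linarith
  have bA : BM m0 (fun ω => (∑ j ∈ range N, y j ω ^ 2) / L) := by
    simp only [div_eq_mul_inv _ L]
    exact (BM.sum N fun j _ => (h.yBM0 j).pow 2).mul (BM.const _)
  have hmk := mul_meas_ge_le_integral_of_nonneg (μ := μ)
    (f := fun ω => |(∑ j ∈ range N, y j ω ^ 2) / L - v|)
    (Eventually.of_forall fun _ => abs_nonneg _) (bA.sub (BM.const v)).abs.int η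
  have hsub : {ω | ε ≤ ‖L / (2 * ∑ j ∈ range N, y j ω ^ 2) - (1 - 2 * a) / 2‖} ⊆
      {ω | η ≤ |(∑ j ∈ range N, y j ω ^ 2) / L - v|} := by
    intro ω hω
    simp only [Set.mem_ofPred_eq] at hω ⊢
    by_contra hlt
    push Not at hlt
    set w := (∑ j ∈ range N, y j ω ^ 2) / L with hw
    have hw1 : |w - v| < v / 2 := hlt.trans_le (min_le_left _ _)
    have hw2 : |w - v| < ε * v ^ 2 := hlt.trans_le (min_le_right _ _)
    have hw3 : v / 2 < w := by linarith [(abs_lt.1 hw1).1]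
    have hwp : 0 < w := by linarith
    have e1 : L / (2 * ∑ j ∈ range N, y j ω ^ 2) = 1 / (2 * w) := by
      have : ∑ j ∈ range N, y j ω ^ 2 = w * L := by rw [hw]; field_simp
      rw [this]
      field_simp
    rw [e1, hv1, Real.norm_eq_abs] at hω
    have e2 : 1 / (2 * w) - 1 / (2 * v) = (v - w) / (2 * w * v) := by field_simp
    rw [e2, abs_div, abs_sub_comm, abs_of_pos (by positivity : 0 < 2 * w * v),
      le_div_iff₀ (by positivity)] at hω
    have : ε * v ^ 2 ≤ ε * (2 * w * v) := by
      gcongr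
      nlinarith
    linarith
  have h1 := measureReal_mono (μ := μ) hsub
  rw [div_div, mul_comm η, ← div_div, le_div_iff₀ hη0]
  calc _ ≤ μ.real {ω | η ≤ |(∑ j ∈ range N, y j ω ^ 2) / L - v|} * η := by gcongr
    _ ≤ _ := by linarith

lemma final_dist (h : ERWData μ G y e a) :
    TendstoInDistribution
      (fun (N : ℕ) ω => ((∑ j ∈ range N, y j ω * e j ω) / √(Real.log ((N : ℝ) + 1))) *
        (Real.log ((N : ℝ) + 1) / (2 * ∑ j ∈ range N, y j ω ^ 2))) atTop
      (fun z : ℝ => z * ((1 - 2 * a) / 2)) (fun _ => μ)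
      (gaussianReal 0 (1 / (1 - 2 * a)).toNNReal) := by
  refine h.clt.continuous_comp_prodMk_of_tendstoInMeasure_const
    (g := fun z : ℝ × ℝ => z.1 * z.2) (by fun_prop) h.inv_meas fun N => ?_
  have := (BM.sum N fun j _ => (h.yBM0 j).pow 2).1
  exact (Measurable.const_div (this.const_mul _) _).aemeasurable

end ERWData


lemma erw_shift_sum (u : ℕ → ℝ) (N : ℕ) :
    ∑ k ∈ Finset.Icc 1 N, u k = ∑ j ∈ range N, u (j + 1) := by
  induction N with
  | zero => simp
  | succ k ih => rw [Finset.sum_Icc_succ_top (by omega), ih, sum_range_succ]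

lemma erwS_succ (X : ℕ → Ω → ℝ) (n : ℕ) (ω : Ω) :
    erwS X (n + 1) ω = erwS X n ω + X (n + 1) ω := by
  unfold erwS
  rw [Finset.sum_Icc_succ_top (by omega)]

lemma erw_data {m0 : MeasurableSpace Ω} (μ : Measure Ω) [IsProbabilityMeasure μ]
    (ℱ : Filtration ℕ m0) (X : ℕ → Ω → ℝ) (p : ℝ)
    (hERW : IsERW μ ℱ X p) (hp : p < 3 / 4) :
    ∃ G : Filtration ℕ m0, ERWData μ G (fun j ω => erwS X (j + 1) ω / ((j + 1 : ℕ) : ℝ))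
      (fun j ω => X (j + 2) ω - (2 * p - 1) * (erwS X (j + 1) ω / ((j + 1 : ℕ) : ℝ)))
      (2 * p - 1) := by
  obtain ⟨hp0, hp1, hX, hXm, hc⟩ := hERW
  have hXb : ∀ n, 1 ≤ n → ∀ ω, |X n ω| = 1 := fun n hn ω => by
    rcases hX n hn ω with h | h <;> simp [h]
  have hSb : ∀ n ω, |erwS X n ω| ≤ n := fun n ω => by
    induction n with
    | zero => simp [erwS]
    | succ k ih =>
      rw [erwS_succ]
      refine (abs_add_le _ _).trans ?_
      rw [hXb _ (by omega)]
      push_cast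
      linarith
  have hSm : ∀ n, Measurable[ℱ n] (erwS X n) := fun n => by
    have : erwS X n = fun ω => ∑ k ∈ Finset.Icc 1 n, X k ω := rfl
    rw [this]
    refine Finset.measurable_sum _ fun k hk => ?_
    rw [Finset.mem_Icc] at hk
    exact (hXm k hk.1).mono (ℱ.mono hk.2) le_rfl
  have hyb : ∀ j ω, |erwS X (j + 1) ω / ((j + 1 : ℕ) : ℝ)| ≤ 1 := fun j ω => by
    rw [abs_div, abs_of_nonneg (by positivity : (0 : ℝ) ≤ ((j + 1 : ℕ) : ℝ))]
    exact div_le_one_of_le₀ (hSb _ ω) (by positivity)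
  refine ⟨⟨fun n => ℱ (n + 1), fun i j hij => ℱ.mono (by omega), fun n => ℱ.le _⟩, ?_⟩
  refine ⟨by linarith, by linarith, fun ω => ?_, fun j ω => ?_, fun j ω => ?_, hyb,
    fun j => ?_, fun j => ?_, fun j g hg => ?_⟩
  · have h1 := hX 1 le_rfl ω
    simp only [erwS]
    rcases h1 with h | h <;> simp [h]
  · rcases hX (j + 2) (by omega) ω with h | h <;> rw [h] <;> ring
  · have e1 : erwS X (j + 1 + 1) ω = erwS X (j + 1) ω + X (j + 2) ω := erwS_succ X (j + 1) ω
    simp only [e1]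
    push_cast
    have h1 : (j : ℝ) + 1 ≠ 0 := by positivity
    have h2 : (j : ℝ) + 1 + 1 ≠ 0 := by positivity
    field_simp
    ring
  · exact (hSm (j + 1)).div_const _
  · refine Measurable.sub (hXm (j + 2) (by omega)) (Measurable.const_mul ?_ _)
    exact ((hSm (j + 1)).mono (ℱ.mono (by omega)) le_rfl).div_const _
  · obtain ⟨hgm, C, hC⟩ := hg
    have hgm' : Measurable[ℱ (j + 1)] g := hgm
    have hgm0 : Measurable g := hgm'.mono (ℱ.le _) le_rfl
    have hXm0 : Measurable (X (j + 2)) := (hXm (j + 2) (by omega)).mono (ℱ.le _) le_rfl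
    have hSm0 : Measurable (erwS X (j + 1)) := (hSm (j + 1)).mono (ℱ.le _) le_rfl
    have hXi : Integrable (X (j + 2)) μ :=
      Integrable.of_bound (C := 1) hXm0.aestronglyMeasurable
        (Eventually.of_forall fun ω => (hXb _ (by omega) ω).le)
    have hgXi : Integrable (g * X (j + 2)) μ :=
      hXi.bdd_mul hgm0.aestronglyMeasurable (Eventually.of_forall hC)
    have hyi : Integrable (fun ω => g ω * ((2 * p - 1) * (erwS X (j + 1) ω / ((j + 1 : ℕ) : ℝ)))) μ := by
      refine Integrable.bdd_mul ?_ hgm0.aestronglyMeasurable (Eventually.of_forall hC)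
      refine Integrable.const_mul ?_ _
      exact Integrable.of_bound (C := 1) (hSm0.div_const _).aestronglyMeasurable
        (Eventually.of_forall (hyb j))
    have h1 : μ[g * X (j + 2) | ℱ (j + 1)] =ᵐ[μ] g * μ[X (j + 2) | ℱ (j + 1)] :=
      condExp_mul_of_stronglyMeasurable_left hgm'.stronglyMeasurable hgXi hXi
    have h2 : ∫ ω, g ω * X (j + 2) ω ∂μ =
        ∫ ω, g ω * ((2 * p - 1) * (erwS X (j + 1) ω / ((j + 1 : ℕ) : ℝ))) ∂μ := by
      calc _ = ∫ ω, (g * X (j + 2)) ω ∂μ := rfl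
        _ = ∫ ω, (μ[g * X (j + 2) | ℱ (j + 1)]) ω ∂μ := (integral_condExp (ℱ.le _)).symm
        _ = _ := by
          refine integral_congr_ae ?_
          filter_upwards [h1, hc (j + 1) (by omega)] with ω w1 w2
          rw [w1, Pi.mul_apply, w2]
    simp only [mul_sub]
    have hgXi' : Integrable (fun ω => g ω * X (j + 2) ω) μ := hgXi
    rw [integral_sub hgXi' hyi, h2, sub_self]

lemma erw_identity (X : ℕ → Ω → ℝ) (p : ℝ) (N : ℕ) (ω : Ω)
    (hA : 0 < ∑ j ∈ range N, (erwS X (j + 1) ω / ((j + 1 : ℕ) : ℝ)) ^ 2)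
    (hL : 0 < Real.log ((N : ℝ) + 1)) :
    Real.sqrt (Real.log ((N + 1 : ℕ) : ℝ)) * (erwPhat X (N + 1) ω - p) =
      ((∑ j ∈ range N, (erwS X (j + 1) ω / ((j + 1 : ℕ) : ℝ)) *
        (X (j + 2) ω - (2 * p - 1) * (erwS X (j + 1) ω / ((j + 1 : ℕ) : ℝ))))
        / √(Real.log ((N : ℝ) + 1))) *
        (Real.log ((N : ℝ) + 1) / (2 * ∑ j ∈ range N,
          (erwS X (j + 1) ω / ((j + 1 : ℕ) : ℝ)) ^ 2)) := by
  unfold erwPhat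
  rw [Nat.add_sub_cancel, erw_shift_sum (fun k => (erwS X k ω / k) * (X (k + 1) ω + erwS X k ω / k)),
    erw_shift_sum (fun k => (erwS X k ω / k) ^ 2)]
  have e1 : ∑ j ∈ range N, (erwS X (j + 1) ω / ((j + 1 : ℕ) : ℝ)) *
        (X (j + 2) ω - (2 * p - 1) * (erwS X (j + 1) ω / ((j + 1 : ℕ) : ℝ))) =
      ∑ j ∈ range N, (erwS X (j + 1) ω / ((j + 1 : ℕ) : ℝ)) *
        (X (j + 1 + 1) ω + erwS X (j + 1) ω / ((j + 1 : ℕ) : ℝ)) -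
      2 * p * ∑ j ∈ range N, (erwS X (j + 1) ω / ((j + 1 : ℕ) : ℝ)) ^ 2 := by
    rw [mul_sum, ← sum_sub_distrib]
    refine sum_congr rfl fun j _ => ?_
    ring
  rw [e1]
  have e2 : ((N + 1 : ℕ) : ℝ) = (N : ℝ) + 1 := by push_cast; rfl
  rw [e2]
  set A := ∑ j ∈ range N, (erwS X (j + 1) ω / ((j + 1 : ℕ) : ℝ)) ^ 2
  set P := ∑ j ∈ range N, (erwS X (j + 1) ω / ((j + 1 : ℕ) : ℝ)) *
        (X (j + 1 + 1) ω + erwS X (j + 1) ω / ((j + 1 : ℕ) : ℝ))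
  set L := Real.log ((N : ℝ) + 1)
  have hr : 0 < √L := Real.sqrt_pos.2 hL
  have hr2 : √L * √L = L := Real.mul_self_sqrt hL.le
  generalize √L = r at *
  rw [← hr2]
  field_simp


/-- In the diffusive regime `0 ≤ p < 3/4`, `√(log n) (p̂_n - p)` converges in distribution
to the centered Gaussian law of variance `(3 - 4p)/4`. -/
theorem erw_clt_diffusive
    {m0 : MeasurableSpace Ω} (μ : Measure Ω) [IsProbabilityMeasure μ]
    (ℱ : Filtration ℕ m0) (X : ℕ → Ω → ℝ) (p : ℝ)
    (hERW : IsERW μ ℱ X p) (hp : p < 3 / 4) :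
    ∀ f : ℝ →ᵇ ℝ,
      Tendsto (fun n : ℕ => ∫ ω, f (Real.sqrt (Real.log n) * (erwPhat X n ω - p)) ∂μ)
        atTop (𝓝 (∫ x, f x ∂(gaussianReal 0 (((3 - 4 * p) / 4).toNNReal)))) := by
  intro f
  obtain ⟨G, h⟩ := erw_data μ ℱ X p hERW hp
  have hd := h.final_dist
  have ht := (ProbabilityMeasure.tendsto_iff_forall_integral_tendsto.1 hd.tendsto) f
  simp only [ProbabilityMeasure.coe_mk] at ht
  have hpos : 0 < 3 - 4 * p := by linarith
  have hg : Measure.map (fun z : ℝ => z * ((1 - 2 * (2 * p - 1)) / 2))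
      (gaussianReal 0 (1 / (1 - 2 * (2 * p - 1))).toNNReal) =
      gaussianReal 0 (((3 - 4 * p) / 4).toNNReal) := by
    rw [gaussianReal_map_mul_const, mul_zero]
    congr 1
    apply NNReal.eq
    have h3 : 1 - 2 * (2 * p - 1) = 3 - 4 * p := by ring
    have h4 : (((1 / (3 - 4 * p)).toNNReal : ℝ≥0) : ℝ) = 1 / (3 - 4 * p) :=
      Real.coe_toNNReal _ (by positivity)
    have h5 : ((((3 - 4 * p) / 4).toNNReal : ℝ≥0) : ℝ) = (3 - 4 * p) / 4 :=
      Real.coe_toNNReal _ (by positivity)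
    rw [NNReal.coe_mul, NNReal.coe_mk, h3, h4, h5]
    field_simp
    norm_num
  rw [hg] at ht
  rw [← tendsto_add_atTop_iff_nat 1]
  refine ht.congr' ?_
  filter_upwards [eventually_ge_atTop 1] with N hN
  rw [integral_map (hd.forall_aemeasurable N) f.continuous.aestronglyMeasurable]
  congr 1
  funext ω
  congr 1
  refine (erw_identity X p N ω ?_ ?_).symm
  · have h0 : (erwS X (0 + 1) ω / ((0 + 1 : ℕ) : ℝ)) ^ 2 = 1 := h.y0 ω
    have h1 := single_le_sum (f := fun j => (erwS X (j + 1) ω / ((j + 1 : ℕ) : ℝ)) ^ 2)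
      (fun j _ => sq_nonneg _) (Finset.mem_range.2 hN)
    simp only [h0] at h1
    linarith
  · apply Real.log_pos
    have : (1 : ℝ) ≤ N := by exact_mod_cast hN
    linarith
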